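/- arXiv:2203.08375 — 4 statements merged into one kernel-verified Lean document; each statement's English description precedes it below -/
import Mathlib

section
/- Let d∈(0,1] and let ψ∈C²((0,d))∩C¹([0,d]) satisfy ψ''(x₂)=f(ψ(x₂)) for x₂∈(0,d), ψ(0)=0, and 0<ψ(x₂)<Q for all x₂∈(0,d). Then ψ'(x₂)>0 for all x₂∈(0,d). -/
open Real Set MeasureTheory

noncomputable section

/-- Every value in `(0,Q)` is attained by `t ↦ Q(3t²−2t³)` on `(0,1)`. -/
lemma exists_mem_Ioo_cubic_eq {Q s : ℝ} (hs : 0 < s) (hsQ : s < Q) :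
    ∃ t ∈ Ioo (0 : ℝ) 1, Q * (3 * t ^ 2 - 2 * t ^ 3) = s := by
  have hc : ContinuousOn (fun t : ℝ => Q * (3 * t ^ 2 - 2 * t ^ 3)) (Icc 0 1) := by fun_prop
  exact intermediate_value_Ioo zero_le_one hc ⟨by norm_num [hs], by norm_num [hsQ]⟩

/-- Derivative of a left inverse of `t ↦ Q(3t²−2t³)`. -/
lemma hasDerivAt_leftInverse_cubic {Q : ℝ} (hQ : 0 < Q) {κ : ℝ → ℝ}
    (hκ : ∀ t ∈ Icc (0 : ℝ) 1, κ (Q * (3 * t ^ 2 - 2 * t ^ 3)) = t)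
    {t : ℝ} (ht : t ∈ Ioo (0 : ℝ) 1) :
    HasDerivAt κ (6 * Q * t * (1 - t))⁻¹ (Q * (3 * t ^ 2 - 2 * t ^ 3)) := by
  have hφ : HasStrictDerivAt (fun t : ℝ => Q * (3 * t ^ 2 - 2 * t ^ 3))
      (6 * Q * t * (1 - t)) t := by
    have h := (((hasStrictDerivAt_pow 2 t).const_mul 3).sub
      ((hasStrictDerivAt_pow 3 t).const_mul 2)).const_mul Q
    refine h.congr_deriv ?_
    norm_num
    ring
  have h1 : 0 < 1 - t := sub_pos.2 ht.2
  have h0 : 0 < t := ht.1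
  refine (hφ.to_local_left_inverse (by positivity) ?_).hasDerivAt
  filter_upwards [Ioo_mem_nhds ht.1 ht.2] with u hu
  exact hκ u (Ioo_subset_Icc_self hu)

/-- Monotonicity of one-dimensional solutions: if `ψ ∈ C²((0,d)) ∩ C¹([0,d])` solves
`ψ'' = f(ψ)` on `(0,d)` with `ψ(0) = 0` and `0 < ψ < Q` on `(0,d)`, then `ψ' > 0`
on `(0,d)`. Here `f(s) = 6Q(1−2κ(s))` with `κ` the inverse of `t ↦ Q(3t²−2t³)`. -/
theorem stmt4
    (Q : ℝ) (hQ : 0 < Q)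
    (κ : ℝ → ℝ) (hκ : ∀ t ∈ Set.Icc (0 : ℝ) 1, κ (Q * (3 * t ^ 2 - 2 * t ^ 3)) = t)
    (f : ℝ → ℝ) (hf : ∀ s : ℝ, f s = 6 * Q * (1 - 2 * κ s))
    (d : ℝ) (hd : d ∈ Set.Ioc (0 : ℝ) 1)
    (ψ : ℝ → ℝ)
    (hC1 : ContDiffOn ℝ 1 ψ (Set.Icc 0 d))
    (hC2 : ContDiffOn ℝ 2 ψ (Set.Ioo 0 d))
    (hode : ∀ x ∈ Set.Ioo (0 : ℝ) d, deriv (deriv ψ) x = f (ψ x))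
    (h0 : ψ 0 = 0)
    (hb : ∀ x ∈ Set.Ioo (0 : ℝ) d, 0 < ψ x ∧ ψ x < Q) :
    ∀ x ∈ Set.Ioo (0 : ℝ) d, 0 < deriv ψ x := by
  have hdiff : DifferentiableOn ℝ ψ (Ioo 0 d) := hC2.differentiableOn (by norm_num)
  have hdiff' : DifferentiableOn ℝ (deriv ψ) (Ioo 0 d) :=
    (hC2.deriv_of_isOpen isOpen_Ioo (m := 1) (by norm_num)).differentiableOn (by norm_num)
  have hk : ∀ x ∈ Ioo 0 d, κ (ψ x) ∈ Ioo (0 : ℝ) 1 ∧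
      Q * (3 * κ (ψ x) ^ 2 - 2 * κ (ψ x) ^ 3) = ψ x := by
    intro x hx
    obtain ⟨t, ht, hts⟩ := exists_mem_Ioo_cubic_eq (hb x hx).1 (hb x hx).2
    have h := hκ t (Ioo_subset_Icc_self ht)
    rw [hts] at h
    rw [h]
    exact ⟨ht, hts⟩
  -- The first integral of the equation.
  set E : ℝ → ℝ := fun x => deriv ψ x ^ 2 - (6 * Q * (κ (ψ x) * (1 - κ (ψ x)))) ^ 2 with hE
  have hE' : ∀ x ∈ Ioo 0 d, HasDerivAt E 0 x := by
    intro x hx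
    obtain ⟨ht, hts⟩ := hk x hx
    have hψ : HasDerivAt ψ (deriv ψ x) x :=
      (hdiff.differentiableAt (isOpen_Ioo.mem_nhds hx)).hasDerivAt
    have hψ' : HasDerivAt (deriv ψ) (f (ψ x)) x :=
      hode x hx ▸ (hdiff'.differentiableAt (isOpen_Ioo.mem_nhds hx)).hasDerivAt
    have hκ' := hasDerivAt_leftInverse_cubic hQ hκ ht
    rw [hts] at hκ'
    have hκψ : HasDerivAt (fun y => κ (ψ y)) _ x := hκ'.comp x hψ
    have h := (hψ'.pow 2).sub (((hκψ.mul (hκψ.const_sub 1)).const_mul (6 * Q)).pow 2)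
    refine h.congr_deriv ?_
    rw [hf]
    have h0 : κ (ψ x) ≠ 0 := ht.1.ne'
    have h1 : 1 - κ (ψ x) ≠ 0 := (sub_pos.2 ht.2).ne'
    simp only [Pi.mul_apply]
    field_simp
    ring
  have hconst : ∀ x ∈ Ioo 0 d, ∀ y ∈ Ioo 0 d, E x = E y := fun x hx y hy =>
    isOpen_Ioo.is_const_of_deriv_eq_zero isPreconnected_Ioo
      (fun z hz => (hE' z hz).differentiableAt.differentiableWithinAt)
      (fun z hz => (hE' z hz).deriv) hx hy
  have hEψ : ∀ x ∈ Ioo 0 d, -(36 * Q * ψ x) ≤ E x := by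
    intro x hx
    obtain ⟨ht, hts⟩ := hk x hx
    simp only [hE]
    generalize κ (ψ x) = t at ht hts
    have hsq : (t * (1 - t)) ^ 2 ≤ 3 * t ^ 2 - 2 * t ^ 3 := by
      have : 0 ≤ t ^ 2 * (2 - t ^ 2) := mul_nonneg (sq_nonneg t) (by nlinarith [ht.1, ht.2])
      nlinarith
    have := mul_le_mul_of_nonneg_left hsq (by positivity : 0 ≤ 36 * Q ^ 2)
    rw [← hts]
    nlinarith [sq_nonneg (deriv ψ x)]
  have hlim : Filter.Tendsto ψ (nhdsWithin 0 (Ioo 0 d)) (nhds 0) := by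
    have h := hC1.continuousOn 0 (left_mem_Icc.2 hd.1.le)
    rw [ContinuousWithinAt, h0] at h
    exact h.mono_left (nhdsWithin_mono _ Ioo_subset_Icc_self)
  have hEnonneg : ∀ x ∈ Ioo 0 d, 0 ≤ E x := by
    intro x hx
    have : (nhdsWithin (0 : ℝ) (Ioo 0 d)).NeBot := left_nhdsWithin_Ioo_neBot hd.1
    refine le_of_tendsto (f := fun y => -(36 * Q * ψ y)) (x := nhdsWithin 0 (Ioo 0 d)) ?_ ?_
    · simpa using (hlim.const_mul (36 * Q)).neg
    · filter_upwards [self_mem_nhdsWithin] with y hy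
      exact (hEψ y hy).trans (hconst y hy x hx).le
  have hne : ∀ x ∈ Ioo 0 d, deriv ψ x ≠ 0 := by
    intro x hx hzero
    have h := hEnonneg x hx
    have h1 : 0 < κ (ψ x) := (hk x hx).1.1
    have h2 : 0 < 1 - κ (ψ x) := sub_pos.2 (hk x hx).1.2
    have h3 : 0 < (6 * Q * (κ (ψ x) * (1 - κ (ψ x)))) ^ 2 := by positivity
    simp only [hE, hzero] at h
    linarith
  intro x hx
  by_contra! hneg
  obtain ⟨y, hy, hyx⟩ := exists_deriv_eq_slope ψ hx.1
    (hC1.continuousOn.mono (Icc_subset_Icc_right hx.2.le))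
    (hdiff.mono (Ioo_subset_Ioo_right hx.2.le))
  have hypos : 0 ≤ deriv ψ y := by
    rw [hyx, h0, sub_zero, sub_zero]
    exact (div_pos (hb x hx).1 hx.1).le
  have hsub : Icc y x ⊆ Ioo 0 d := fun z hz => ⟨hy.1.trans_le hz.1, hz.2.trans_lt hx.2⟩
  obtain ⟨z, hz, hz0⟩ := intermediate_value_Icc' hy.2.le (hdiff'.continuousOn.mono hsub)
    ⟨hneg, hypos⟩
  exact hne z (hsub hz) hz0
end
end

section
/- Let c₁>c₂≥0 and suppose that for i=1,2 there exist dᵢ∈(0,1] and functions φ_{cᵢ}∈C²((0,dᵢ))∩C¹([0,dᵢ]) with φ_{cᵢ}''(x₂)=f(φ_{cᵢ}(x₂)) on (0,dᵢ), φ_{cᵢ}(0)=0 and φ_{cᵢ}'(0)=cᵢ. Set d=min{d₁,d₂} and assume 0<φ_{cᵢ}(x₂)<Q for all x₂∈(0,d) and i=1,2. Then φ_{c₁}(x₂)>φ_{c₂}(x₂) for all x₂∈(0,d). -/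
open Real Set MeasureTheory

noncomputable section

/-- A left inverse `κ` on `[0,1]` of `t ↦ Q(3t² - 2t³)` is a right inverse on `[0,Q]`, with values
in `[0,1]`. -/
lemma cubic_inverse_mem_and_apply {Q : ℝ} {κ : ℝ → ℝ}
    (hκ : ∀ t ∈ Icc (0 : ℝ) 1, κ (Q * (3 * t ^ 2 - 2 * t ^ 3)) = t)
    {s : ℝ} (hs : s ∈ Icc 0 Q) :
    κ s ∈ Icc (0 : ℝ) 1 ∧ Q * (3 * κ s ^ 2 - 2 * κ s ^ 3) = s := by
  have hcont : ContinuousOn (fun t : ℝ => Q * (3 * t ^ 2 - 2 * t ^ 3)) (Icc 0 1) := by fun_prop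
  have hs' : s ∈ Icc (Q * (3 * (0 : ℝ) ^ 2 - 2 * 0 ^ 3)) (Q * (3 * (1 : ℝ) ^ 2 - 2 * 1 ^ 3)) := by
    norm_num
    exact hs
  obtain ⟨t, ht, rfl⟩ := intermediate_value_Icc zero_le_one hcont hs'
  simp only [hκ t ht]
  exact ⟨ht, trivial⟩

lemma cubic_inverse_monotoneOn {Q : ℝ} (hQ : 0 < Q) {κ : ℝ → ℝ}
    (hκ : ∀ t ∈ Icc (0 : ℝ) 1, κ (Q * (3 * t ^ 2 - 2 * t ^ 3)) = t) :
    MonotoneOn κ (Icc 0 Q) := by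
  intro a ha b hb hab
  obtain ⟨⟨ha0, ha1⟩, hae⟩ := cubic_inverse_mem_and_apply hκ ha
  obtain ⟨⟨hb0, hb1⟩, hbe⟩ := cubic_inverse_mem_and_apply hκ hb
  by_contra! hlt
  have hlt' : 3 * κ b ^ 2 - 2 * κ b ^ 3 < 3 * κ a ^ 2 - 2 * κ a ^ 3 := by
    have hpos : 0 < 3 * (κ a + κ b) - 2 * (κ a ^ 2 + κ a * κ b + κ b ^ 2) := by
      nlinarith [mul_nonneg ha0 (sub_nonneg.2 ha1), mul_nonneg hb0 (sub_nonneg.2 hb1),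
        mul_nonneg ha0 (sub_nonneg.2 hb1), mul_nonneg hb0 (sub_nonneg.2 ha1)]
    nlinarith [mul_pos (sub_pos.2 hlt) hpos]
  have := mul_lt_mul_of_pos_left hlt' hQ
  linarith

lemma cubic_inverse_image {Q : ℝ} (hQ : 0 < Q) {κ : ℝ → ℝ}
    (hκ : ∀ t ∈ Icc (0 : ℝ) 1, κ (Q * (3 * t ^ 2 - 2 * t ^ 3)) = t) :
    Icc 0 1 ⊆ κ '' Icc 0 Q := by
  rintro t ⟨h0, h1⟩
  refine ⟨_, ⟨mul_nonneg hQ.le ?_, ?_⟩, hκ t ⟨h0, h1⟩⟩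
  · nlinarith [mul_nonneg (sq_nonneg t) (sub_nonneg.2 h1), sq_nonneg t]
  · have : 3 * t ^ 2 - 2 * t ^ 3 ≤ 1 := by
      nlinarith [mul_nonneg (sq_nonneg (1 - t)) h0, sq_nonneg (1 - t)]
    nlinarith

lemma cubic_inverse_mem_Ioo {Q : ℝ} {κ : ℝ → ℝ}
    (hκ : ∀ t ∈ Icc (0 : ℝ) 1, κ (Q * (3 * t ^ 2 - 2 * t ^ 3)) = t)
    {s : ℝ} (hs : s ∈ Ioo 0 Q) : κ s ∈ Ioo (0 : ℝ) 1 := by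
  obtain ⟨⟨h0, h1⟩, he⟩ := cubic_inverse_mem_and_apply hκ (Ioo_subset_Icc_self hs)
  refine ⟨h0.lt_of_ne fun h => ?_, h1.lt_of_ne fun h => ?_⟩
  · rw [← h] at he
    linarith [hs.1]
  · rw [h] at he
    linarith [hs.2]

/-- The potential `18Q²κ²(1-κ)²` is a primitive of `6Q(1-2κ)` on `(0,Q)`. -/
lemma hasDerivAt_cubic_potential {Q : ℝ} (hQ : 0 < Q) {κ : ℝ → ℝ}
    (hκ : ∀ t ∈ Icc (0 : ℝ) 1, κ (Q * (3 * t ^ 2 - 2 * t ^ 3)) = t)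
    {s : ℝ} (hs : s ∈ Ioo 0 Q) :
    HasDerivAt (fun y => 18 * Q ^ 2 * (κ y * (1 - κ y)) ^ 2) (6 * Q * (1 - 2 * κ s)) s := by
  obtain ⟨h0, h1⟩ := cubic_inverse_mem_Ioo hκ hs
  have hcont : ContinuousAt κ s :=
    continuousAt_of_monotoneOn_of_image_mem_nhds (cubic_inverse_monotoneOn hQ hκ)
      (Icc_mem_nhds hs.1 hs.2)
      (Filter.mem_of_superset (Icc_mem_nhds h0 h1) (cubic_inverse_image hQ hκ))
  have hcubic : HasDerivAt (fun t : ℝ => Q * (3 * t ^ 2 - 2 * t ^ 3))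
      (6 * Q * (κ s * (1 - κ s))) (κ s) := by
    refine ((((hasDerivAt_pow 2 (κ s)).const_mul 3).sub
      ((hasDerivAt_pow 3 (κ s)).const_mul 2)).const_mul Q).congr_deriv ?_
    push_cast
    ring
  have hpos : 0 < κ s * (1 - κ s) := mul_pos h0 (sub_pos.2 h1)
  have hinv : HasDerivAt κ (6 * Q * (κ s * (1 - κ s)))⁻¹ s := by
    refine HasDerivAt.of_local_left_inverse hcont hcubic (by positivity) ?_
    filter_upwards [Icc_mem_nhds hs.1 hs.2] with y hy
    exact (cubic_inverse_mem_and_apply hκ hy).2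
  refine (((hinv.mul (hinv.const_sub 1)).pow 2).const_mul (18 * Q ^ 2)).congr_deriv ?_
  have h1' : 1 - κ s ≠ 0 := (sub_pos.2 h1).ne'
  have h0' := h0.ne'
  simp only [Pi.mul_apply]
  field_simp
  ring

lemma continuousWithinAt_cubic_potential {Q : ℝ} (hQ : 0 < Q) {κ : ℝ → ℝ}
    (hκ : ∀ t ∈ Icc (0 : ℝ) 1, κ (Q * (3 * t ^ 2 - 2 * t ^ 3)) = t) :
    ContinuousWithinAt (fun y => 18 * Q ^ 2 * (κ y * (1 - κ y)) ^ 2) (Ici 0) 0 := by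
  have hκ0 : κ 0 = 0 := by simpa using hκ 0 (by simp)
  have hcont : ContinuousWithinAt κ (Ici 0) 0 := by
    refine continuousWithinAt_right_of_monotoneOn_of_image_mem_nhdsWithin
      (cubic_inverse_monotoneOn hQ hκ) (Icc_mem_nhdsGE hQ) ?_
    rw [hκ0]
    exact Filter.mem_of_superset (Icc_mem_nhdsGE zero_lt_one) (cubic_inverse_image hQ hκ)
  exact ((hcont.mul (continuousWithinAt_const.sub hcont)).pow 2).const_mul _

lemma ContDiffOn.hasDerivAt_derivWithin_Icc {φ : ℝ → ℝ} {d x : ℝ}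
    (hC1 : ContDiffOn ℝ 1 φ (Icc 0 d)) (hx : x ∈ Ioo 0 d) :
    HasDerivAt φ (derivWithin φ (Icc 0 d) x) x :=
  ((hC1.differentiableOn one_ne_zero) x (Ioo_subset_Icc_self hx)).hasDerivWithinAt.hasDerivAt
    (Icc_mem_nhds hx.1 hx.2)

/-- Conservation of energy for `φ'' = g(φ)` when `G' = g`. -/
lemma sq_derivWithin_eq_of_deriv_deriv_eq {Q d b : ℝ} {g G φ : ℝ → ℝ}
    (hG : ∀ s ∈ Ioo 0 Q, HasDerivAt G (g s) s) (hG0 : ContinuousWithinAt G (Ici 0) 0)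
    (hC1 : ContDiffOn ℝ 1 φ (Icc 0 d)) (hC2 : ContDiffOn ℝ 2 φ (Ioo 0 d))
    (hode : ∀ x ∈ Ioo 0 d, deriv (deriv φ) x = g (φ x)) (h0 : φ 0 = 0)
    (hbd : b ≤ d) (hb : ∀ x ∈ Ioo 0 b, φ x ∈ Ioo 0 Q) {x : ℝ} (hx : x ∈ Ioo 0 b) :
    derivWithin φ (Icc 0 d) x ^ 2 =
      derivWithin φ (Icc 0 d) 0 ^ 2 + 2 * (G (φ x) - G 0) := by
  set ψ := derivWithin φ (Icc 0 d)
  have hd : 0 < d := hx.1.trans (hx.2.trans_le hbd)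
  have hψcont : ContinuousOn ψ (Icc 0 d) :=
    hC1.continuousOn_derivWithin (uniqueDiffOn_Icc hd) le_rfl
  have hsub : Icc 0 x ⊆ Icc 0 d := Icc_subset_Icc_right (hx.2.le.trans hbd)
  have hφ : ∀ y ∈ Ioo 0 d, HasDerivAt φ (ψ y) y := fun y hy => hC1.hasDerivAt_derivWithin_Icc hy
  have hψ' : ∀ y ∈ Ioo 0 d, HasDerivAt ψ (g (φ y)) y := by
    intro y hy
    have hdiff : DifferentiableOn ℝ (deriv φ) (Ioo 0 d) :=
      (hC2.deriv_of_isOpen (m := 1) isOpen_Ioo (by norm_num)).differentiableOn one_ne_zero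
    have hderiv := (hdiff.differentiableAt (Ioo_mem_nhds hy.1 hy.2)).hasDerivAt
    rw [hode y hy] at hderiv
    refine hderiv.congr_of_eventuallyEq ?_
    filter_upwards [Ioo_mem_nhds hy.1 hy.2] with z hz
    exact (hφ z hz).deriv.symm
  have hmem : ∀ y ∈ Icc 0 x, 0 ≤ φ y := by
    intro y hy
    rcases hy.1.eq_or_lt with rfl | hy0
    · exact h0.ge
    · exact (hb y ⟨hy0, hy.2.trans_lt hx.2⟩).1.le
  have hGφ : ContinuousOn (fun y => G (φ y)) (Icc 0 x) := by
    intro y hy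
    have hφy : ContinuousWithinAt φ (Icc 0 x) y := (hC1.continuousOn.mono hsub) y hy
    rcases hy.1.eq_or_lt with rfl | hy0
    · rw [← h0] at hG0
      exact ContinuousWithinAt.comp (g := G) hG0 hφy fun z hz => by simpa [h0] using hmem z hz
    · exact (hG _ (hb y ⟨hy0, hy.2.trans_lt hx.2⟩)).continuousAt.comp_continuousWithinAt hφy
  obtain ⟨y, -, hslope⟩ := exists_hasDerivAt_eq_slope (fun y => ψ y ^ 2 - 2 * G (φ y))
    (fun _ => 0) hx.1 (((hψcont.mono hsub).pow 2).sub (hGφ.const_mul 2)) (fun y hy => by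
      have hyd : y ∈ Ioo 0 d := ⟨hy.1, hy.2.trans (hx.2.trans_le hbd)⟩
      refine (((hψ' y hyd).pow 2).sub (((hG _ (hb y ⟨hy.1, hy.2.trans hx.2⟩)).comp y
        (hφ y hyd)).const_mul 2)).congr_deriv ?_
      push_cast
      ring)
  rw [eq_comm, div_eq_zero_iff, or_iff_left (sub_pos.2 hx.1).ne', h0] at hslope
  linarith

/-- Solutions of `φ'' = g(φ)`, `φ(0) = 0` with values in `(0,Q)` are strictly ordered by their
nonnegative initial slopes when `g` has a primitive bounded below by its value at `0`. -/
lemma lt_of_deriv_deriv_eq_of_initial_slope_lt {Q d₁ d₂ : ℝ} {g G φ₁ φ₂ : ℝ → ℝ}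
    (hG : ∀ s ∈ Ioo 0 Q, HasDerivAt G (g s) s) (hG0 : ContinuousWithinAt G (Ici 0) 0)
    (hGnonneg : ∀ s ∈ Ioo 0 Q, G 0 ≤ G s)
    (hC1₁ : ContDiffOn ℝ 1 φ₁ (Icc 0 d₁)) (hC2₁ : ContDiffOn ℝ 2 φ₁ (Ioo 0 d₁))
    (hode₁ : ∀ x ∈ Ioo 0 d₁, deriv (deriv φ₁) x = g (φ₁ x)) (h0₁ : φ₁ 0 = 0)
    (hC1₂ : ContDiffOn ℝ 1 φ₂ (Icc 0 d₂)) (hC2₂ : ContDiffOn ℝ 2 φ₂ (Ioo 0 d₂))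
    (hode₂ : ∀ x ∈ Ioo 0 d₂, deriv (deriv φ₂) x = g (φ₂ x)) (h0₂ : φ₂ 0 = 0)
    (hslope : derivWithin φ₂ (Icc 0 d₂) 0 < derivWithin φ₁ (Icc 0 d₁) 0)
    (hslope₂ : 0 ≤ derivWithin φ₂ (Icc 0 d₂) 0)
    (hb₁ : ∀ x ∈ Ioo 0 (min d₁ d₂), φ₁ x ∈ Ioo 0 Q)
    (hb₂ : ∀ x ∈ Ioo 0 (min d₁ d₂), φ₂ x ∈ Ioo 0 Q) :
    ∀ x ∈ Ioo 0 (min d₁ d₂), φ₂ x < φ₁ x := by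
  have henergy₁ := fun {x} (hx : x ∈ Ioo 0 (min d₁ d₂)) =>
    sq_derivWithin_eq_of_deriv_deriv_eq hG hG0 hC1₁ hC2₁ hode₁ h0₁ (min_le_left _ _) hb₁ hx
  have henergy₂ := fun {x} (hx : x ∈ Ioo 0 (min d₁ d₂)) =>
    sq_derivWithin_eq_of_deriv_deriv_eq hG hG0 hC1₂ hC2₂ hode₂ h0₂ (min_le_right _ _) hb₂ hx
  have hpos : ∀ x ∈ Ioo 0 (min d₁ d₂), 0 < derivWithin φ₁ (Icc 0 d₁) x := by
    intro x hx
    by_contra! hle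
    have hxd : x < d₁ := hx.2.trans_le (min_le_left _ _)
    have hcont : ContinuousOn (derivWithin φ₁ (Icc 0 d₁)) (Icc 0 x) :=
      (hC1₁.continuousOn_derivWithin (uniqueDiffOn_Icc (hx.1.trans hxd)) le_rfl).mono
        (Icc_subset_Icc_right hxd.le)
    obtain ⟨y, hy, hy0⟩ := intermediate_value_Icc' hx.1.le hcont
      ⟨hle, (hslope₂.trans_lt hslope).le⟩
    have hyne : y ≠ 0 := by
      rintro rfl
      linarith
    have hymem : y ∈ Ioo 0 (min d₁ d₂) := ⟨hy.1.lt_of_ne' hyne, hy.2.trans_lt hx.2⟩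
    have := henergy₁ hymem
    rw [hy0] at this
    nlinarith [hGnonneg _ (hb₁ y hymem)]
  have hcontact : ∀ x ∈ Ioo 0 (min d₁ d₂), φ₂ x = φ₁ x →
      derivWithin φ₂ (Icc 0 d₂) x < derivWithin φ₁ (Icc 0 d₁) x := by
    intro x hx heq
    refine lt_of_pow_lt_pow_left₀ 2 (hpos x hx).le ?_
    rw [henergy₁ hx, henergy₂ hx, heq]
    gcongr
  have hle : ∀ x ∈ Ioo 0 (min d₁ d₂), φ₂ x ≤ φ₁ x := by
    intro x hx
    have hx₁ : x < d₁ := hx.2.trans_le (min_le_left _ _)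
    have hx₂ : x < d₂ := hx.2.trans_le (min_le_right _ _)
    have hright : ∀ {φ : ℝ → ℝ} {d : ℝ}, ContDiffOn ℝ 1 φ (Icc 0 d) → x < d →
        ∀ y ∈ Ico 0 x, HasDerivWithinAt φ (derivWithin φ (Icc 0 d) y) (Ici y) y := by
      intro φ d hφ hxd y hy
      exact (hφ.differentiableOn one_ne_zero y
        ⟨hy.1, (hy.2.trans hxd).le⟩).hasDerivWithinAt.mono_of_mem_nhdsWithin
        (Icc_mem_nhdsGE_of_mem ⟨hy.1, hy.2.trans hxd⟩)
    refine image_le_of_deriv_right_lt_deriv_boundary'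
      (hC1₂.continuousOn.mono (Icc_subset_Icc_right hx₂.le)) (hright hC1₂ hx₂)
      (h0₂.trans h0₁.symm).le
      (hC1₁.continuousOn.mono (Icc_subset_Icc_right hx₁.le)) (hright hC1₁ hx₁) ?_
      (right_mem_Icc.2 hx.1.le)
    intro y hy heq
    rcases hy.1.eq_or_lt with rfl | hy0
    · exact hslope
    · exact hcontact y ⟨hy0, hy.2.trans hx.2⟩ heq
  intro x hx
  refine (hle x hx).lt_of_ne fun heq => ?_
  have hmin : IsLocalMin (φ₁ - φ₂) x := by
    filter_upwards [Ioo_mem_nhds hx.1 hx.2] with y hy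
    simpa [heq] using hle y hy
  have hzero := hmin.hasDerivAt_eq_zero
    ((hC1₁.hasDerivAt_derivWithin_Icc ⟨hx.1, hx.2.trans_le (min_le_left _ _)⟩).sub
      (hC1₂.hasDerivAt_derivWithin_Icc ⟨hx.1, hx.2.trans_le (min_le_right _ _)⟩))
  linarith [hcontact x hx heq]

/-- Monotonicity in the initial slope: if `φ_{c₁}`, `φ_{c₂}` solve `φ'' = f(φ)` with
`φ(0) = 0`, `φ'(0) = cᵢ`, `c₁ > c₂ ≥ 0`, and both stay in `(0,Q)` on `(0,d)` with
`d = min{d₁,d₂}`, then `φ_{c₁} > φ_{c₂}` on `(0,d)`. -/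
theorem stmt5
    (Q : ℝ) (hQ : 0 < Q)
    (κ : ℝ → ℝ) (hκ : ∀ t ∈ Set.Icc (0 : ℝ) 1, κ (Q * (3 * t ^ 2 - 2 * t ^ 3)) = t)
    (f : ℝ → ℝ) (hf : ∀ s : ℝ, f s = 6 * Q * (1 - 2 * κ s))
    (c₁ c₂ : ℝ) (hc : c₂ < c₁) (hc₂ : 0 ≤ c₂)
    (d₁ d₂ : ℝ) (hd₁ : d₁ ∈ Set.Ioc (0 : ℝ) 1) (hd₂ : d₂ ∈ Set.Ioc (0 : ℝ) 1)
    (φ₁ φ₂ : ℝ → ℝ)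
    (hC1₁ : ContDiffOn ℝ 1 φ₁ (Set.Icc 0 d₁))
    (hC2₁ : ContDiffOn ℝ 2 φ₁ (Set.Ioo 0 d₁))
    (hode₁ : ∀ x ∈ Set.Ioo (0 : ℝ) d₁, deriv (deriv φ₁) x = f (φ₁ x))
    (h0₁ : φ₁ 0 = 0) (hc₁' : derivWithin φ₁ (Set.Icc 0 d₁) 0 = c₁)
    (hC1₂ : ContDiffOn ℝ 1 φ₂ (Set.Icc 0 d₂))
    (hC2₂ : ContDiffOn ℝ 2 φ₂ (Set.Ioo 0 d₂))
    (hode₂ : ∀ x ∈ Set.Ioo (0 : ℝ) d₂, deriv (deriv φ₂) x = f (φ₂ x))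
    (h0₂ : φ₂ 0 = 0) (hc₂' : derivWithin φ₂ (Set.Icc 0 d₂) 0 = c₂)
    (hb₁ : ∀ x ∈ Set.Ioo (0 : ℝ) (min d₁ d₂), 0 < φ₁ x ∧ φ₁ x < Q)
    (hb₂ : ∀ x ∈ Set.Ioo (0 : ℝ) (min d₁ d₂), 0 < φ₂ x ∧ φ₂ x < Q) :
    ∀ x ∈ Set.Ioo (0 : ℝ) (min d₁ d₂), φ₂ x < φ₁ x := by
  have hκ0 : κ 0 = 0 := by simpa using hκ 0 (by simp)
  subst hc₁' hc₂'
  refine lt_of_deriv_deriv_eq_of_initial_slope_lt (Q := Q) (g := f)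
    (G := fun y => 18 * Q ^ 2 * (κ y * (1 - κ y)) ^ 2) (fun s hs => ?_)
    (continuousWithinAt_cubic_potential hQ hκ) (fun s _ => ?_)
    hC1₁ hC2₁ hode₁ h0₁ hC1₂ hC2₂ hode₂ h0₂ hc hc₂ hb₁ hb₂
  · rw [hf s]
    exact hasDerivAt_cubic_potential hQ hκ hs
  · simp only [hκ0]
    rw [zero_mul, zero_pow two_ne_zero, mul_zero]
    positivity
end
end

section
/- For every c≥0 there exists δ>0 and a function φ_c∈C²((0,δ))∩C¹([0,δ]) with 0≤φ_c(x₂)<Q on [0,δ] such that φ_c''(x₂)=f(φ_c(x₂)) on (0,δ), φ_c(0)=0 and φ_c'(0)=c; moreover, this local solution is unique: if ψ̃∈C²((0,δ'))∩C¹([0,δ']) with 0≤ψ̃<Q satisfies the same initial value problem on some interval [0,δ'], then ψ̃ coincides with φ_c on [0,min{δ,δ'}] after possibly shrinking δ. -/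
open Real Set MeasureTheory

noncomputable section

open Filter Topology

/-- The cubic `t ↦ Q (3 t² - 2 t³)`. -/
def cubicProfile (Q t : ℝ) : ℝ := Q * (3 * t ^ 2 - 2 * t ^ 3)

/-- The function `φ` is a `C²((0,δ)) ∩ C¹([0,δ])` solution of `φ'' = f(φ)`, `φ(0) = 0`,
`φ'(0) = c`, taking values in `[0,Q)`. -/
structure IsLocalSolution (f : ℝ → ℝ) (Q c δ : ℝ) (φ : ℝ → ℝ) : Prop where
  contDiffOn_one : ContDiffOn ℝ 1 φ (Icc 0 δ)
  contDiffOn_two : ContDiffOn ℝ 2 φ (Ioo 0 δ)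
  mem_range : ∀ x ∈ Icc (0 : ℝ) δ, 0 ≤ φ x ∧ φ x < Q
  deriv_deriv : ∀ x ∈ Ioo (0 : ℝ) δ, deriv (deriv φ) x = f (φ x)
  map_zero : φ 0 = 0
  derivWithin_zero : derivWithin φ (Icc 0 δ) 0 = c

/-- A continuous function on the line, with values in `[0,1]`, that inverts the cubic profile
on `[0,Q]`. -/
structure IsProfileInverse (Q : ℝ) (K : ℝ → ℝ) : Prop where
  continuous : Continuous K
  mem_Icc : ∀ s, K s ∈ Icc (0 : ℝ) 1
  right_inv : ∀ s ∈ Icc 0 Q, cubicProfile Q (K s) = s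
  left_inv : ∀ t ∈ Icc (0 : ℝ) 1, K (cubicProfile Q t) = t

/-- The speed of a solution with initial slope `c` at the level `s`, as given by conservation
of energy. -/
def levelSpeed (Q c : ℝ) (K : ℝ → ℝ) (s : ℝ) : ℝ :=
  √(c ^ 2 + (6 * Q * (K s * (1 - K s))) ^ 2)

theorem eq_left_of_hasDerivAt_zero {g : ℝ → ℝ} {a b : ℝ} (hc : ContinuousOn g (Icc a b))
    (hd : ∀ x ∈ Ioo a b, HasDerivAt g 0 x) : ∀ x ∈ Icc a b, g x = g a := by
  intro x hx
  rcases hx.1.eq_or_lt with rfl | hlt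
  · rfl
  obtain ⟨y, -, hy⟩ := exists_hasDerivAt_eq_slope g (fun _ => 0) hlt
    (hc.mono (Icc_subset_Icc_right hx.2)) fun y hy => hd y ⟨hy.1, hy.2.trans_le hx.2⟩
  have hne : x - a ≠ 0 := (sub_pos.2 hlt).ne'
  field_simp at hy
  linarith

theorem contDiffOn_two_of_hasDerivAt {φ v w : ℝ → ℝ} {s : Set ℝ} (hs : IsOpen s)
    (hφ : ∀ x ∈ s, HasDerivAt φ (v x) x) (hv : ∀ x ∈ s, HasDerivAt v (w x) x)
    (hw : ContinuousOn w s) : ContDiffOn ℝ 2 φ s := by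
  have hv1 : ContDiffOn ℝ 1 v s := by
    rw [show (1 : WithTop ℕ∞) = 0 + 1 by norm_num, contDiffOn_succ_iff_deriv_of_isOpen hs]
    refine ⟨fun x hx => (hv x hx).differentiableAt.differentiableWithinAt, by simp, ?_⟩
    exact contDiffOn_zero.2 (hw.congr fun x hx => (hv x hx).deriv)
  rw [show (2 : WithTop ℕ∞) = 1 + 1 by norm_num, contDiffOn_succ_iff_deriv_of_isOpen hs]
  exact ⟨fun x hx => (hφ x hx).differentiableAt.differentiableWithinAt, by simp,
    hv1.congr fun x hx => (hφ x hx).deriv⟩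

theorem hasDerivAt_cubicProfile (Q t : ℝ) :
    HasDerivAt (cubicProfile Q) (6 * Q * (t * (1 - t))) t := by
  have h := (((hasDerivAt_pow 2 t).const_mul 3).sub ((hasDerivAt_pow 3 t).const_mul 2)).const_mul Q
  refine h.congr_deriv ?_
  norm_num
  ring

theorem continuous_cubicProfile (Q : ℝ) : Continuous (cubicProfile Q) := by
  unfold cubicProfile
  fun_prop

theorem monotoneOn_cubicProfile {Q : ℝ} (hQ : 0 < Q) :
    MonotoneOn (cubicProfile Q) (Icc 0 1) := by
  intro a ha b hb hab
  refine mul_le_mul_of_nonneg_left ?_ hQ.le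
  have h : 0 ≤ 3 * (a + b) - 2 * (a ^ 2 + a * b + b ^ 2) := by
    nlinarith [mul_nonneg ha.1 (sub_nonneg.2 ha.2), mul_nonneg hb.1 (sub_nonneg.2 hb.2),
      mul_nonneg ha.1 (sub_nonneg.2 hb.2), mul_nonneg hb.1 (sub_nonneg.2 ha.2)]
  nlinarith [mul_nonneg (sub_nonneg.2 hab) h]

theorem cubicProfile_mem_Icc {Q t : ℝ} (hQ : 0 < Q) (ht : t ∈ Icc (0 : ℝ) 1) :
    cubicProfile Q t ∈ Icc 0 Q := by
  have h0 := monotoneOn_cubicProfile hQ (left_mem_Icc.2 zero_le_one) ht ht.1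
  have h1 := monotoneOn_cubicProfile hQ ht (right_mem_Icc.2 zero_le_one) ht.2
  norm_num [cubicProfile] at h0 h1 ⊢
  exact ⟨h0, h1⟩

theorem exists_cubicProfile_eq {Q s : ℝ} (hs : s ∈ Icc 0 Q) :
    ∃ t ∈ Icc (0 : ℝ) 1, cubicProfile Q t = s := by
  have h := intermediate_value_Icc zero_le_one (continuous_cubicProfile Q).continuousOn
  have hs' : s ∈ Icc (cubicProfile Q 0) (cubicProfile Q 1) := by
    norm_num [cubicProfile]
    exact hs
  exact h hs'

theorem exists_isProfileInverse {Q : ℝ} (hQ : 0 < Q) {κ : ℝ → ℝ}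
    (hκ : ∀ t ∈ Icc (0 : ℝ) 1, κ (cubicProfile Q t) = t) :
    ∃ K, IsProfileInverse Q K ∧ ∀ s ∈ Icc 0 Q, K s = κ s := by
  have hmem : ∀ s ∈ Icc 0 Q, κ s ∈ Icc (0 : ℝ) 1 := by
    intro s hs
    obtain ⟨t, ht, rfl⟩ := exists_cubicProfile_eq hs
    rwa [hκ t ht]
  have hmono : MonotoneOn κ (Icc 0 Q) := by
    intro a ha b hb hab
    obtain ⟨t, ht, rfl⟩ := exists_cubicProfile_eq ha
    obtain ⟨u, hu, rfl⟩ := exists_cubicProfile_eq hb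
    by_contra hlt
    have hle := hab.antisymm (monotoneOn_cubicProfile hQ hu ht
      (by rw [hκ t ht, hκ u hu] at hlt; linarith))
    exact hlt (by rw [hle])
  let k : ℝ → Icc (0 : ℝ) 1 := fun s =>
    ⟨κ (projIcc 0 Q hQ.le s), hmem _ (projIcc 0 Q hQ.le s).2⟩
  have hk : Continuous k := by
    refine Monotone.continuous_of_surjective ?_ ?_
    · intro a b hab
      exact hmono (projIcc 0 Q hQ.le a).2 (projIcc 0 Q hQ.le b).2 (monotone_projIcc hQ.le hab)
    · rintro ⟨t, ht⟩
      refine ⟨cubicProfile Q t, Subtype.ext ?_⟩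
      simp only [k, projIcc_of_mem hQ.le (cubicProfile_mem_Icc hQ ht), hκ t ht]
  have heq : ∀ s ∈ Icc 0 Q, (k s : ℝ) = κ s := fun s hs => by
    simp only [k, projIcc_of_mem hQ.le hs]
  refine ⟨fun s => k s, ⟨continuous_subtype_val.comp hk, fun s => (k s).2, ?_, ?_⟩, heq⟩
  · intro s hs
    obtain ⟨t, ht, rfl⟩ := exists_cubicProfile_eq hs
    rw [heq _ hs, hκ t ht]
  · intro t ht
    rw [heq _ (cubicProfile_mem_Icc hQ ht), hκ t ht]

namespace IsProfileInverse

variable {Q c : ℝ} {K : ℝ → ℝ}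

theorem apply_zero (hK : IsProfileInverse Q K) : K 0 = 0 := by
  simpa [cubicProfile] using hK.left_inv 0 (left_mem_Icc.2 zero_le_one)

theorem mem_Ioo (hK : IsProfileInverse Q K) {s : ℝ} (hs : s ∈ Ioo 0 Q) : K s ∈ Ioo (0 : ℝ) 1 := by
  have h := hK.right_inv s (Ioo_subset_Icc_self hs)
  refine ⟨(hK.mem_Icc s).1.lt_of_ne' fun h0 => ?_, (hK.mem_Icc s).2.lt_of_ne fun h1 => ?_⟩
  · rw [h0] at h
    norm_num [cubicProfile] at h
    linarith [hs.1]
  · rw [h1] at h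
    norm_num [cubicProfile] at h
    linarith [hs.2]

theorem flux_pos (hK : IsProfileInverse Q K) {s : ℝ} (hs : s ∈ Ioo 0 Q) :
    0 < 6 * Q * (K s * (1 - K s)) := by
  have hQ : 0 < Q := hs.1.trans hs.2
  have h1 := (hK.mem_Ioo hs).1
  have h2 : 0 < 1 - K s := sub_pos.2 (hK.mem_Ioo hs).2
  positivity

theorem hasDerivAt (hK : IsProfileInverse Q K) {s : ℝ} (hs : s ∈ Ioo 0 Q) :
    HasDerivAt K (6 * Q * (K s * (1 - K s)))⁻¹ s :=
  (hasDerivAt_cubicProfile Q (K s)).of_local_left_inverse hK.continuous.continuousAt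
    (hK.flux_pos hs).ne'
    (by filter_upwards [Icc_mem_nhds hs.1 hs.2] with y hy using hK.right_inv y hy)

/-- The square of the level speed has derivative `2 f`. -/
theorem hasDerivAt_energy (hK : IsProfileInverse Q K) {s : ℝ} (hs : s ∈ Ioo 0 Q) :
    HasDerivAt (fun s => c ^ 2 + (6 * Q * (K s * (1 - K s))) ^ 2)
      (2 * (6 * Q * (1 - 2 * K s))) s := by
  have hd := hK.hasDerivAt hs
  have h := ((((hd.mul (hd.const_sub 1)).const_mul (6 * Q)).pow 2).const_add (c ^ 2))
  refine h.congr_deriv ?_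
  have hQ : Q ≠ 0 := (hs.1.trans hs.2).ne'
  have h1 : K s ≠ 0 := (hK.mem_Ioo hs).1.ne'
  have h2 : 1 - K s ≠ 0 := (sub_pos.2 (hK.mem_Ioo hs).2).ne'
  simp
  field_simp
  ring

theorem continuous_levelSpeed (hK : IsProfileInverse Q K) : Continuous (levelSpeed Q c K) := by
  have := hK.continuous
  unfold levelSpeed
  fun_prop

theorem levelSpeed_zero (hK : IsProfileInverse Q K) (hc : 0 ≤ c) : levelSpeed Q c K 0 = c := by
  simp [levelSpeed, hK.apply_zero, Real.sqrt_sq hc]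

theorem levelSpeed_pos (hK : IsProfileInverse Q K) {s : ℝ} (hs : s ∈ Ioo 0 Q) :
    0 < levelSpeed Q c K s := by
  have := hK.flux_pos hs
  unfold levelSpeed
  positivity

theorem hasDerivAt_levelSpeed (hK : IsProfileInverse Q K) {s : ℝ} (hs : s ∈ Ioo 0 Q) :
    HasDerivAt (levelSpeed Q c K) (6 * Q * (1 - 2 * K s) / levelSpeed Q c K s) s := by
  have hpos := hK.flux_pos hs
  have h := (hK.hasDerivAt_energy (c := c) hs).sqrt (by positivity)
  refine h.congr_deriv ?_
  rw [mul_div_mul_left _ _ two_ne_zero]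
  rfl

end IsProfileInverse

/-- A solution moves at the level speed on some initial interval. -/
theorem IsLocalSolution.exists_hasDerivAt_levelSpeed {f K φ : ℝ → ℝ} {Q c δ : ℝ} (hQ : 0 < Q)
    (hc : 0 ≤ c) (hδ : 0 < δ) (hK : IsProfileInverse Q K)
    (hf : ∀ s ∈ Icc 0 Q, f s = 6 * Q * (1 - 2 * K s)) (h : IsLocalSolution f Q c δ φ) :
    ∃ ε > 0, ε ≤ δ ∧ ∀ x ∈ Ioo 0 ε, φ x ∈ Ioo 0 Q ∧
      HasDerivAt φ (levelSpeed Q c K (φ x)) x := by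
  have hφc : ContinuousOn φ (Icc 0 δ) := h.contDiffOn_one.continuousOn
  set g := derivWithin φ (Icc 0 δ) with hg
  have hgc : ContinuousOn g (Icc 0 δ) :=
    h.contDiffOn_one.continuousOn_derivWithin (uniqueDiffOn_Icc hδ) le_rfl
  have hgφ : ∀ x ∈ Ioo 0 δ, HasDerivAt φ (g x) x := fun x hx =>
    ((h.contDiffOn_one.differentiableOn one_ne_zero x
      (Ioo_subset_Icc_self hx)).hasDerivWithinAt).hasDerivAt (Icc_mem_nhds hx.1 hx.2)
  have hgd : ∀ x ∈ Ioo 0 δ, HasDerivAt g (6 * Q * (1 - 2 * K (φ x))) x := by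
    intro x hx
    have h2 := h.contDiffOn_two
    rw [show (2 : WithTop ℕ∞) = 1 + 1 by norm_num,
      contDiffOn_succ_iff_deriv_of_isOpen isOpen_Ioo] at h2
    have hd := ((h2.2.2.differentiableOn one_ne_zero).differentiableAt
      (Ioo_mem_nhds hx.1 hx.2)).hasDerivAt
    have hr := h.mem_range x (Ioo_subset_Icc_self hx)
    rw [h.deriv_deriv x hx, hf _ ⟨hr.1, hr.2.le⟩] at hd
    refine hd.congr_of_eventuallyEq ?_
    filter_upwards [Ioo_mem_nhds hx.1 hx.2] with y hy using (hgφ y hy).deriv.symm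
  have hKφ : ContinuousOn (fun x => K (φ x)) (Icc 0 δ) := hK.continuous.comp_continuousOn hφc
  obtain ⟨ε, hε, hεδ, hsmall⟩ : ∃ ε > 0, ε ≤ δ ∧ ∀ x ∈ Ioo 0 ε, K (φ x) < 1 / 2 := by
    have h0 := hKφ 0 (left_mem_Icc.2 hδ.le)
    have hev := h0.eventually_lt_const (u := 1 / 2) (by
      simp [h.map_zero, hK.apply_zero])
    obtain ⟨ε, hε, hsub⟩ := Metric.mem_nhdsWithin_iff.1 hev
    refine ⟨min ε δ, lt_min hε hδ, min_le_right _ _, fun x hx => hsub ⟨?_, ?_⟩⟩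
    · rw [Metric.mem_ball, Real.dist_eq, sub_zero, abs_of_pos hx.1]
      exact hx.2.trans_le (min_le_left _ _)
    · exact ⟨hx.1.le, hx.2.le.trans (min_le_right _ _)⟩
  have hsub : Icc 0 ε ⊆ Icc 0 δ := Icc_subset_Icc_right hεδ
  have hsub' : Ioo 0 ε ⊆ Ioo 0 δ := Ioo_subset_Ioo_right hεδ
  have hgm : StrictMonoOn g (Icc 0 ε) := by
    refine strictMonoOn_of_deriv_pos (convex_Icc _ _) (hgc.mono hsub) fun x hx => ?_
    rw [interior_Icc] at hx
    rw [(hgd x (hsub' hx)).deriv]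
    have := hsmall x hx
    have : 0 < 1 - 2 * K (φ x) := by linarith
    positivity
  have hgpos : ∀ x ∈ Ioo 0 ε, 0 < g x := fun x hx => by
    have := hgm (left_mem_Icc.2 hε.le) (Ioo_subset_Icc_self hx) hx.1
    rw [hg, h.derivWithin_zero, ← hg] at this
    linarith
  have hφm : StrictMonoOn φ (Icc 0 ε) := by
    refine strictMonoOn_of_deriv_pos (convex_Icc _ _) (hφc.mono hsub) fun x hx => ?_
    rw [interior_Icc] at hx
    rw [(hgφ x (hsub' hx)).deriv]
    exact hgpos x hx
  have hφmem : ∀ x ∈ Ioo 0 ε, φ x ∈ Ioo 0 Q := fun x hx => by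
    have := hφm (left_mem_Icc.2 hε.le) (Ioo_subset_Icc_self hx) hx.1
    rw [h.map_zero] at this
    exact ⟨this, (h.mem_range x (hsub (Ioo_subset_Icc_self hx))).2⟩
  have henergy : ∀ x ∈ Icc 0 ε,
      g x ^ 2 - (c ^ 2 + (6 * Q * (K (φ x) * (1 - K (φ x)))) ^ 2) = 0 := by
    intro x hx
    have hKε := hKφ.mono hsub
    have hgε := hgc.mono hsub
    rw [eq_left_of_hasDerivAt_zero
      (g := fun x => g x ^ 2 - (c ^ 2 + (6 * Q * (K (φ x) * (1 - K (φ x)))) ^ 2))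
      ((hgε.pow 2).sub (continuousOn_const.add
        ((continuousOn_const.mul (hKε.mul (continuousOn_const.sub hKε))).pow 2))) ?_ x hx]
    · rw [hg, h.derivWithin_zero]
      simp [h.map_zero, hK.apply_zero]
    · intro y hy
      have hE := (hK.hasDerivAt_energy (c := c) (hφmem y hy)).comp y (hgφ y (hsub' hy))
      refine (((hgd y (hsub' hy)).pow 2).sub hE).congr_deriv ?_
      simp
      ring
  refine ⟨ε, hε, hεδ, fun x hx => ⟨hφmem x hx, ?_⟩⟩
  have hx' := henergy x (Ioo_subset_Icc_self hx)
  rw [levelSpeed, ← sub_eq_zero.1 hx', Real.sqrt_sq (hgpos x hx).le]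
  exact hgφ x (hsub' hx)

/-- A primitive `H` of the inverse level speed measures the time a solution needs. -/
theorem IsLocalSolution.exists_time_eq {f K H φ : ℝ → ℝ} {Q c δ : ℝ} (hQ : 0 < Q)
    (hc : 0 ≤ c) (hδ : 0 < δ) (hK : IsProfileInverse Q K)
    (hf : ∀ s ∈ Icc 0 Q, f s = 6 * Q * (1 - 2 * K s)) (hHc : Continuous H) (hH0 : H 0 = 0)
    (hHd : ∀ s ∈ Ioo 0 Q, HasDerivAt H (levelSpeed Q c K s)⁻¹ s)
    (h : IsLocalSolution f Q c δ φ) :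
    ∃ ε > 0, ε ≤ δ ∧ ∀ x ∈ Icc 0 ε, H (φ x) = x := by
  obtain ⟨ε, hε, hεδ, hder⟩ := h.exists_hasDerivAt_levelSpeed hQ hc hδ hK hf
  refine ⟨ε, hε, hεδ, fun x hx => ?_⟩
  have hφc := h.contDiffOn_one.continuousOn.mono (Icc_subset_Icc_right hεδ)
  have hconst := eq_left_of_hasDerivAt_zero (g := fun x => H (φ x) - x) (by fun_prop)
    (fun y hy => by
      obtain ⟨hm, hd⟩ := hder y hy
      refine (((hHd _ hm).comp y hd).sub (hasDerivAt_id y)).congr_deriv ?_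
      rw [inv_mul_cancel₀ (hK.levelSpeed_pos hm).ne', sub_self]) x hx
  simp only [h.map_zero, hH0, sub_zero] at hconst
  linarith

theorem IsLocalSolution.exists_eqOn {f K H φ ψ : ℝ → ℝ} {Q c δ δ' : ℝ} (hQ : 0 < Q)
    (hc : 0 ≤ c) (hδ : 0 < δ) (hδ' : 0 < δ') (hK : IsProfileInverse Q K)
    (hf : ∀ s ∈ Icc 0 Q, f s = 6 * Q * (1 - 2 * K s)) (hHc : Continuous H) (hH0 : H 0 = 0)
    (hHd : ∀ s ∈ Ioo 0 Q, HasDerivAt H (levelSpeed Q c K s)⁻¹ s)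
    (hHi : InjOn H (Icc 0 Q)) (hφ : IsLocalSolution f Q c δ φ)
    (hψ : IsLocalSolution f Q c δ' ψ) :
    ∃ ε > 0, ε ≤ min δ δ' ∧ ∀ x ∈ Icc 0 ε, ψ x = φ x := by
  obtain ⟨a, ha, haδ, hφt⟩ := hφ.exists_time_eq hQ hc hδ hK hf hHc hH0 hHd
  obtain ⟨b, hb, hbδ, hψt⟩ := hψ.exists_time_eq hQ hc hδ' hK hf hHc hH0 hHd
  refine ⟨min a b, lt_min ha hb, min_le_min haδ hbδ, fun x hx => ?_⟩
  have hxa : x ∈ Icc 0 a := ⟨hx.1, hx.2.trans (min_le_left _ _)⟩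
  have hxb : x ∈ Icc 0 b := ⟨hx.1, hx.2.trans (min_le_right _ _)⟩
  have hφr := hφ.mem_range x ⟨hx.1, hxa.2.trans haδ⟩
  have hψr := hψ.mem_range x ⟨hx.1, hxb.2.trans hbδ⟩
  exact hHi ⟨hψr.1, hψr.2.le⟩ ⟨hφr.1, hφr.2.le⟩ ((hψt x hxb).trans (hφt x hxa).symm)

/-- For zero initial slope the cubic profile itself is a solution. -/
theorem isLocalSolution_cubicProfile {f K : ℝ → ℝ} {Q : ℝ} (hQ : 0 < Q)
    (hK : IsProfileInverse Q K) (hf : ∀ s ∈ Icc 0 Q, f s = 6 * Q * (1 - 2 * K s)) :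
    IsLocalSolution f Q 0 (1 / 2) (cubicProfile Q) := by
  have hmem : ∀ x ∈ Icc (0 : ℝ) (1 / 2), x ∈ Icc (0 : ℝ) 1 := fun x hx =>
    ⟨hx.1, by linarith [hx.2]⟩
  have hsmooth : ∀ n, ContDiff ℝ n (cubicProfile Q) := fun n => by
    unfold cubicProfile
    fun_prop
  refine ⟨(hsmooth 1).contDiffOn, (hsmooth 2).contDiffOn, fun x hx => ?_, fun x hx => ?_, ?_, ?_⟩
  · refine ⟨(cubicProfile_mem_Icc hQ (hmem x hx)).1, ?_⟩
    have h := monotoneOn_cubicProfile hQ (hmem x hx) ⟨by norm_num, by norm_num⟩ hx.2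
    norm_num [cubicProfile] at h ⊢
    linarith
  · have hx' := hmem x (Ioo_subset_Icc_self hx)
    rw [hf _ (cubicProfile_mem_Icc hQ hx'), hK.left_inv x hx',
      funext fun t => (hasDerivAt_cubicProfile Q t).deriv]
    have hd := ((hasDerivAt_id x).mul ((hasDerivAt_id x).const_sub 1)).const_mul (6 * Q)
    refine (hd.congr_deriv ?_).deriv
    simp only [id]
    ring
  · simp [cubicProfile]
  · rw [(hasDerivAt_cubicProfile Q 0).hasDerivWithinAt.derivWithin
      (uniqueDiffOn_Icc (by norm_num) 0 ⟨le_rfl, by norm_num⟩)]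
    simp

/-- For positive initial slope, the time function `H` is a primitive of the inverse level speed
that is an increasing bijection of the line. -/
theorem exists_timeFunction {K : ℝ → ℝ} {Q c : ℝ} (hQ : 0 < Q) (hc : 0 < c)
    (hK : IsProfileInverse Q K) :
    ∃ H : ℝ ≃o ℝ, H 0 = 0 ∧ ∀ s, HasDerivAt H (levelSpeed Q c K s)⁻¹ s := by
  have hpos : ∀ s, 0 < levelSpeed Q c K s := fun s => by
    unfold levelSpeed
    positivity
  have hle : ∀ s, levelSpeed Q c K s ≤ c + 6 * Q := fun s => by
    have h1 := (hK.mem_Icc s).1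
    have h2 := sub_nonneg.2 (hK.mem_Icc s).2
    have h3 : K s * (1 - K s) ≤ 1 := by nlinarith
    refine Real.sqrt_le_iff.2 ⟨by positivity, ?_⟩
    have h4 : 6 * Q * (K s * (1 - K s)) ≤ 6 * Q := mul_le_of_le_one_right (by positivity) h3
    have h5 : 0 ≤ 6 * Q * (K s * (1 - K s)) := by positivity
    nlinarith [mul_pos hc hQ]
  have hcont : Continuous fun s => (levelSpeed Q c K s)⁻¹ :=
    hK.continuous_levelSpeed.inv₀ fun s => (hpos s).ne'
  let H : ℝ → ℝ := fun s => ∫ u in (0 : ℝ)..s, (levelSpeed Q c K u)⁻¹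
  have hHd : ∀ s, HasDerivAt H (levelSpeed Q c K s)⁻¹ s := fun s =>
    (hcont.integral_hasStrictDerivAt 0 s).hasDerivAt
  have hH0 : H 0 = 0 := intervalIntegral.integral_same
  have hHm : StrictMono H := strictMono_of_deriv_pos fun s => by
    rw [(hHd s).deriv]
    exact inv_pos.2 (hpos s)
  have hm : 0 < (c + 6 * Q)⁻¹ := by positivity
  have hlin : Monotone fun s => H s - (c + 6 * Q)⁻¹ * s := by
    have hd : ∀ s, HasDerivAt (fun s => H s - (c + 6 * Q)⁻¹ * s)
        ((levelSpeed Q c K s)⁻¹ - (c + 6 * Q)⁻¹ * 1) s := fun s =>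
      (hHd s).sub ((hasDerivAt_id s).const_mul _)
    refine monotone_of_deriv_nonneg (fun s => (hd s).differentiableAt) fun s => ?_
    rw [(hd s).deriv, mul_one, sub_nonneg]
    exact inv_anti₀ (hpos s) (hle s)
  have hHs : Function.Surjective H := by
    refine Continuous.surjective
      (continuous_iff_continuousAt.2 fun s => (hHd s).continuousAt) ?_ ?_
    · refine tendsto_atTop_mono' atTop ?_ (tendsto_id.const_mul_atTop hm)
      filter_upwards [eventually_ge_atTop 0] with s hs
      have := hlin hs
      simp only [hH0] at this
      simp only [id]
      linarith
    · refine tendsto_atBot_mono' atBot ?_ (tendsto_id.const_mul_atBot hm)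
      filter_upwards [eventually_le_atBot 0] with s hs
      have := hlin hs
      simp only [hH0] at this
      simp only [id]
      linarith
  exact ⟨hHm.orderIsoOfSurjective H hHs, hH0, hHd⟩

/-- For positive initial slope the inverse of the time function is a solution. -/
theorem isLocalSolution_timeFunction_symm {f K : ℝ → ℝ} {Q c : ℝ} (hQ : 0 < Q) (hc : 0 < c)
    (hK : IsProfileInverse Q K) (hf : ∀ s ∈ Icc 0 Q, f s = 6 * Q * (1 - 2 * K s))
    (H : ℝ ≃o ℝ) (hH0 : H 0 = 0) (hHd : ∀ s, HasDerivAt H (levelSpeed Q c K s)⁻¹ s) :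
    IsLocalSolution f Q c (H (Q / 2)) H.symm := by
  have hpos : ∀ s, 0 < levelSpeed Q c K s := fun s => by
    unfold levelSpeed
    positivity
  have hφ0 : H.symm 0 = 0 := by rw [← hH0, H.symm_apply_apply, hH0]
  have hδ : 0 < H (Q / 2) := by
    rw [← hH0]
    exact H.strictMono (by positivity)
  have hφc : Continuous H.symm := H.symm.continuous
  have hφd : ∀ x, HasDerivAt H.symm (levelSpeed Q c K (H.symm x)) x := fun x => by
    have := (hHd (H.symm x)).of_local_left_inverse hφc.continuousAt (inv_pos.2 (hpos _)).ne'
      (Eventually.of_forall H.apply_symm_apply)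
    rwa [inv_inv] at this
  have hmem : ∀ x ∈ Ioo 0 (H (Q / 2)), H.symm x ∈ Ioo 0 Q := fun x hx => by
    have h1 := H.symm.strictMono hx.1
    have h2 := H.symm.strictMono hx.2
    rw [hφ0] at h1
    rw [H.symm_apply_apply] at h2
    exact ⟨h1, by linarith⟩
  have hvd : ∀ x ∈ Ioo 0 (H (Q / 2)), HasDerivAt (fun x => levelSpeed Q c K (H.symm x))
      (6 * Q * (1 - 2 * K (H.symm x))) x := fun x hx =>
    ((hK.hasDerivAt_levelSpeed (hmem x hx)).comp x (hφd x)).congr_deriv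
      (div_mul_cancel₀ _ (hpos _).ne')
  have hKc := hK.continuous
  refine ⟨ContDiff.contDiffOn ?_, contDiffOn_two_of_hasDerivAt isOpen_Ioo (fun x _ => hφd x) hvd
    (by fun_prop), fun x hx => ?_, fun x hx => ?_, hφ0, ?_⟩
  · rw [contDiff_one_iff_deriv, funext fun x => (hφd x).deriv]
    exact ⟨fun x => (hφd x).differentiableAt, hK.continuous_levelSpeed.comp hφc⟩
  · have h1 := H.symm.monotone hx.1
    have h2 := H.symm.monotone hx.2
    rw [hφ0] at h1
    rw [H.symm_apply_apply] at h2
    exact ⟨h1, by linarith⟩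
  · rw [funext fun x => (hφd x).deriv, (hvd x hx).deriv,
      hf _ (Ioo_subset_Icc_self (hmem x hx))]
  · rw [(hφd 0).hasDerivWithinAt.derivWithin
      (uniqueDiffOn_Icc hδ 0 (left_mem_Icc.2 hδ.le)), hφ0, hK.levelSpeed_zero hc.le]

theorem exists_isLocalSolution_and_timeFunction {f K : ℝ → ℝ} {Q c : ℝ} (hQ : 0 < Q) (hc : 0 ≤ c)
    (hK : IsProfileInverse Q K) (hf : ∀ s ∈ Icc 0 Q, f s = 6 * Q * (1 - 2 * K s)) :
    ∃ δ > 0, ∃ φ H : ℝ → ℝ, IsLocalSolution f Q c δ φ ∧ Continuous H ∧ H 0 = 0 ∧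
      (∀ s ∈ Ioo 0 Q, HasDerivAt H (levelSpeed Q c K s)⁻¹ s) ∧ InjOn H (Icc 0 Q) := by
  rcases hc.eq_or_lt with rfl | hc
  · refine ⟨1 / 2, by norm_num, cubicProfile Q, K, isLocalSolution_cubicProfile hQ hK hf,
      hK.continuous, hK.apply_zero, fun s hs => ?_, fun a ha b hb hab => ?_⟩
    · refine (hK.hasDerivAt hs).congr_deriv ?_
      rw [levelSpeed, zero_pow two_ne_zero, zero_add, Real.sqrt_sq (hK.flux_pos hs).le]
    · rw [← hK.right_inv a ha, ← hK.right_inv b hb, hab]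
  · obtain ⟨H, hH0, hHd⟩ := exists_timeFunction hQ hc hK
    refine ⟨H (Q / 2), ?_, H.symm, H, isLocalSolution_timeFunction_symm hQ hc hK hf H hH0 hHd,
      H.continuous, hH0, fun s _ => hHd s, H.injective.injOn⟩
    rw [gt_iff_lt, ← hH0]
    exact H.strictMono (by positivity)

/-- Local existence and uniqueness for the (non-Lipschitz) initial value problem
`φ'' = f(φ)`, `φ(0) = 0`, `φ'(0) = c ≥ 0`, with `0 ≤ φ < Q`: there are `δ > 0` and
`φ_c ∈ C²((0,δ)) ∩ C¹([0,δ])` solving it, and any other solution of the same problem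
on some `[0,δ']` coincides with `φ_c` on `[0,δ'']` for some `0 < δ'' ≤ min{δ,δ'}`. -/
theorem stmt6
    (Q : ℝ) (hQ : 0 < Q)
    (κ : ℝ → ℝ) (hκ : ∀ t ∈ Set.Icc (0 : ℝ) 1, κ (Q * (3 * t ^ 2 - 2 * t ^ 3)) = t)
    (f : ℝ → ℝ) (hf : ∀ s : ℝ, f s = 6 * Q * (1 - 2 * κ s)) :
    ∀ c : ℝ, 0 ≤ c → ∃ δ > 0, ∃ φ : ℝ → ℝ,
      ContDiffOn ℝ 1 φ (Set.Icc 0 δ) ∧ ContDiffOn ℝ 2 φ (Set.Ioo 0 δ) ∧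
      (∀ x ∈ Set.Icc (0 : ℝ) δ, 0 ≤ φ x ∧ φ x < Q) ∧
      (∀ x ∈ Set.Ioo (0 : ℝ) δ, deriv (deriv φ) x = f (φ x)) ∧
      φ 0 = 0 ∧ derivWithin φ (Set.Icc 0 δ) 0 = c ∧
      (∀ δ' > 0, ∀ ψ : ℝ → ℝ,
        ContDiffOn ℝ 1 ψ (Set.Icc 0 δ') → ContDiffOn ℝ 2 ψ (Set.Ioo 0 δ') →
        (∀ x ∈ Set.Icc (0 : ℝ) δ', 0 ≤ ψ x ∧ ψ x < Q) →
        (∀ x ∈ Set.Ioo (0 : ℝ) δ', deriv (deriv ψ) x = f (ψ x)) →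
        ψ 0 = 0 → derivWithin ψ (Set.Icc 0 δ') 0 = c →
        ∃ δ'' > 0, δ'' ≤ min δ δ' ∧ ∀ x ∈ Set.Icc (0 : ℝ) δ'', ψ x = φ x) := by
  intro c hc
  obtain ⟨K, hK, hKκ⟩ := exists_isProfileInverse hQ hκ
  have hfK : ∀ s ∈ Icc 0 Q, f s = 6 * Q * (1 - 2 * K s) := fun s hs => by rw [hf, hKκ s hs]
  obtain ⟨δ, hδ, φ, H, hφ, hHc, hH0, hHd, hHi⟩ :=
    exists_isLocalSolution_and_timeFunction hQ hc hK hfK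
  refine ⟨δ, hδ, φ, hφ.contDiffOn_one, hφ.contDiffOn_two, hφ.mem_range, hφ.deriv_deriv,
    hφ.map_zero, hφ.derivWithin_zero, fun δ' hδ' ψ h1 h2 hr hd h0 hd0 => ?_⟩
  exact hφ.exists_eqOn hQ hc hδ hδ' hK hfK hHc hH0 hHd hHi ⟨h1, h2, hr, hd, h0, hd0⟩
end
end

section
/- Let ψ∈C²((0,1))∩C¹([0,1]) satisfy ψ''(x₂)=f(ψ(x₂)) for x₂∈(0,1), ψ(0)=0, ψ(1)=Q, and 0<ψ(x₂)<Q for all x₂∈(0,1). Then ψ(x₂)=Q(3x₂²−2x₂³) for all x₂∈[0,1]. -/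
open Real Set MeasureTheory

noncomputable section

/-- On `[0,1]` the cubic `3t² − 2t³` separates points at least quadratically. -/
lemma sq_sub_le_cubic_sub {a b : ℝ} (ha : 0 ≤ a) (hab : a ≤ b) (hb : b ≤ 1) :
    (b - a) ^ 2 ≤ (3 * b ^ 2 - 2 * b ^ 3) - (3 * a ^ 2 - 2 * a ^ 3) := by
  have h : 0 ≤ (b - a) * (2 * (b * (1 - b)) + 2 * (a * (1 - a)) + 2 * (a * (1 - b))) := by
    have h1 : 0 ≤ b * (1 - b) := mul_nonneg (ha.trans hab) (by linarith)
    have h2 : 0 ≤ a * (1 - a) := mul_nonneg ha (by linarith)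
    have h3 : 0 ≤ a * (1 - b) := mul_nonneg ha (by linarith)
    exact mul_nonneg (by linarith) (by linarith)
  linarith

lemma exists_cubic_eq {Q s : ℝ} (hs : s ∈ Icc 0 Q) :
    ∃ t ∈ Icc (0 : ℝ) 1, Q * (3 * t ^ 2 - 2 * t ^ 3) = s := by
  have hc : ContinuousOn (fun t : ℝ => Q * (3 * t ^ 2 - 2 * t ^ 3)) (Icc 0 1) := by fun_prop
  have := intermediate_value_Icc (zero_le_one' ℝ) hc
  norm_num at this
  exact this hs

/-- A left inverse of the cubic on `[0,1]` is continuous on `[0,Q]`. -/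
lemma continuousOn_cubic_leftInverse {Q : ℝ} (hQ : 0 < Q) {κ : ℝ → ℝ}
    (hκ : ∀ t ∈ Icc (0 : ℝ) 1, κ (Q * (3 * t ^ 2 - 2 * t ^ 3)) = t) :
    ContinuousOn κ (Icc 0 Q) := by
  have key : ∀ s ∈ Icc 0 Q, ∀ r ∈ Icc 0 Q, (κ s - κ r) ^ 2 ≤ |s - r| / Q := by
    intro s hs r hr
    obtain ⟨b, hb, rfl⟩ := exists_cubic_eq hs
    obtain ⟨a, ha, rfl⟩ := exists_cubic_eq hr
    rw [hκ a ha, hκ b hb, ← mul_sub, abs_mul, abs_of_pos hQ, mul_div_cancel_left₀ _ hQ.ne']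
    rcases le_total a b with h | h
    · exact (sq_sub_le_cubic_sub ha.1 h hb.2).trans (le_abs_self _)
    · rw [abs_sub_comm, sub_sq_comm]
      exact (sq_sub_le_cubic_sub hb.1 h ha.2).trans (le_abs_self _)
  rw [Metric.continuousOn_iff]
  intro r hr ε hε
  refine ⟨Q * ε ^ 2, by positivity, fun s hs hsr => ?_⟩
  rw [Real.dist_eq] at hsr ⊢
  refine abs_lt_of_sq_lt_sq ((key s hs r hr).trans_lt ?_) hε.le
  rwa [div_lt_iff₀' hQ]

/-- A left inverse of the cubic on `[0,1]` has the expected derivative at interior points. -/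
lemma hasDerivAt_cubic_leftInverse {Q : ℝ} (hQ : 0 < Q) {κ : ℝ → ℝ}
    (hκ : ∀ t ∈ Icc (0 : ℝ) 1, κ (Q * (3 * t ^ 2 - 2 * t ^ 3)) = t)
    {t : ℝ} (ht : t ∈ Ioo (0 : ℝ) 1) :
    HasDerivAt κ (6 * Q * (t * (1 - t)))⁻¹ (Q * (3 * t ^ 2 - 2 * t ^ 3)) := by
  have hd : HasStrictDerivAt (fun t : ℝ => Q * (3 * t ^ 2 - 2 * t ^ 3))
      (6 * Q * (t * (1 - t))) t := by
    have := ((((hasStrictDerivAt_id t).pow 2).const_mul 3).sub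
      (((hasStrictDerivAt_id t).pow 3).const_mul 2)).const_mul Q
    refine this.congr_deriv ?_
    simp
    ring
  have hne : 6 * Q * (t * (1 - t)) ≠ 0 :=
    (mul_pos (by positivity) (mul_pos ht.1 (by linarith [ht.2]))).ne'
  refine (hd.to_local_left_inverse hne ?_).hasDerivAt
  filter_upwards [Icc_mem_nhds ht.1 ht.2] with x hx using hκ x hx

/-- Uniqueness for the boundary value problem on `(0,1)`: if
`ψ ∈ C²((0,1)) ∩ C¹([0,1])` solves `ψ'' = f(ψ)` on `(0,1)` with `ψ(0) = 0`, `ψ(1) = Q`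
and `0 < ψ < Q` on `(0,1)`, then `ψ(x₂) = Q(3x₂² − 2x₂³)` on `[0,1]`. -/
theorem stmt7
    (Q : ℝ) (hQ : 0 < Q)
    (κ : ℝ → ℝ) (hκ : ∀ t ∈ Set.Icc (0 : ℝ) 1, κ (Q * (3 * t ^ 2 - 2 * t ^ 3)) = t)
    (f : ℝ → ℝ) (hf : ∀ s : ℝ, f s = 6 * Q * (1 - 2 * κ s))
    (ψ : ℝ → ℝ)
    (hC1 : ContDiffOn ℝ 1 ψ (Set.Icc 0 1))
    (hC2 : ContDiffOn ℝ 2 ψ (Set.Ioo 0 1))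
    (hode : ∀ x ∈ Set.Ioo (0 : ℝ) 1, deriv (deriv ψ) x = f (ψ x))
    (h0 : ψ 0 = 0) (h1 : ψ 1 = Q)
    (hb : ∀ x ∈ Set.Ioo (0 : ℝ) 1, 0 < ψ x ∧ ψ x < Q) :
    ∀ x ∈ Set.Icc (0 : ℝ) 1, ψ x = Q * (3 * x ^ 2 - 2 * x ^ 3) := by
  have hsurj : ∀ x ∈ Icc (0 : ℝ) 1, ψ x ∈ Icc 0 Q := by
    intro x hx
    rcases eq_or_lt_of_le hx.1 with rfl | hx0
    · simp [h0, hQ.le]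
    rcases eq_or_lt_of_le hx.2 with rfl | hx1
    · simp [h1, hQ.le]
    exact ⟨(hb x ⟨hx0, hx1⟩).1.le, (hb x ⟨hx0, hx1⟩).2.le⟩
  -- The reparametrization `τ = κ ∘ ψ` satisfies `Q (3τ² − 2τ³) = ψ`; it suffices to show `τ = id`.
  set τ : ℝ → ℝ := fun x => κ (ψ x) with hτ
  have hφτ : ∀ x ∈ Icc (0 : ℝ) 1,
      τ x ∈ Icc (0 : ℝ) 1 ∧ Q * (3 * τ x ^ 2 - 2 * τ x ^ 3) = ψ x := by
    intro x hx
    obtain ⟨t, ht, hts⟩ := exists_cubic_eq (hsurj x hx)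
    have : τ x = t := by rw [hτ, ← hκ t ht, hts]
    rw [this]
    exact ⟨ht, hts⟩
  have hτ0 : τ 0 = 0 := by simpa [hτ, h0] using hκ 0 (by simp)
  have hτ1 : τ 1 = 1 := by
    have := hκ 1 (by simp)
    norm_num at this
    simpa [hτ, h1] using this
  have hτc : ContinuousOn τ (Icc 0 1) :=
    (continuousOn_cubic_leftInverse hQ hκ).comp hC1.continuousOn hsurj
  have hτI : ∀ x ∈ Ioo (0 : ℝ) 1, τ x ∈ Ioo (0 : ℝ) 1 := by
    intro x hx
    obtain ⟨hm, he⟩ := hφτ x (Ioo_subset_Icc_self hx)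
    have hbx := hb x hx
    refine ⟨hm.1.lt_of_ne fun h => ?_, hm.2.lt_of_ne fun h => ?_⟩
    · rw [← h] at he
      norm_num at he
      linarith
    · rw [h] at he
      norm_num at he
      linarith
  have hw : ∀ x ∈ Ioo (0 : ℝ) 1, 0 < 6 * Q * (τ x * (1 - τ x)) := fun x hx =>
    mul_pos (by positivity) (mul_pos (hτI x hx).1 (by linarith [(hτI x hx).2]))
  have hψd : ∀ x ∈ Ioo (0 : ℝ) 1, HasDerivAt ψ (deriv ψ x) x := fun x hx =>
    ((hC2.differentiableOn (by norm_num)).differentiableAt (isOpen_Ioo.mem_nhds hx)).hasDerivAt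
  have hψdd : ∀ x ∈ Ioo (0 : ℝ) 1, HasDerivAt (deriv ψ) (6 * Q * (1 - 2 * τ x)) x := by
    intro x hx
    have h : ContDiffOn ℝ 1 (deriv ψ) (Ioo 0 1) :=
      hC2.deriv_of_isOpen isOpen_Ioo (by norm_num)
    have := ((h.differentiableOn (by norm_num)).differentiableAt
      (isOpen_Ioo.mem_nhds hx)).hasDerivAt
    rwa [hode x hx, hf] at this
  have hτd : ∀ x ∈ Ioo (0 : ℝ) 1,
      HasDerivAt τ ((6 * Q * (τ x * (1 - τ x)))⁻¹ * deriv ψ x) x := by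
    intro x hx
    have h := hasDerivAt_cubic_leftInverse hQ hκ (hτI x hx)
    rw [(hφτ x (Ioo_subset_Icc_self hx)).2] at h
    exact h.comp x (hψd x hx)
  -- Conservation of energy.
  have hE : ∀ x ∈ Ioo (0 : ℝ) 1, HasDerivAt
      (fun y => deriv ψ y ^ 2 - (6 * Q * (τ y * (1 - τ y))) ^ 2) 0 x := by
    intro x hx
    have ht := hτd x hx
    refine (((hψdd x hx).pow 2).sub
      (((ht.mul (ht.const_sub 1)).const_mul (6 * Q)).pow 2)).congr_deriv ?_
    have h1 : τ x ≠ 0 := (hτI x hx).1.ne'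
    have h2 : 1 - τ x ≠ 0 := by linarith [(hτI x hx).2]
    simp
    field_simp
    ring
  obtain ⟨c, hc⟩ := isOpen_Ioo.exists_is_const_of_deriv_eq_zero isPreconnected_Ioo
    (fun x hx => (hE x hx).differentiableAt.differentiableWithinAt) (fun x hx => (hE x hx).deriv)
  have hc0 : 0 ≤ c := by
    have hlim : Filter.Tendsto (fun y => -(6 * Q * (τ y * (1 - τ y))) ^ 2)
        (nhdsWithin 0 (Ioo 0 1)) (nhds 0) := by
      have h : ContinuousWithinAt (fun y => -(6 * Q * (τ y * (1 - τ y))) ^ 2) (Ioo 0 1) 0 := by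
        have := (hτc 0 (by simp)).mono Ioo_subset_Icc_self
        fun_prop
      simpa [ContinuousWithinAt, hτ0] using h
    have : (nhdsWithin (0 : ℝ) (Ioo 0 1)).NeBot := left_nhdsWithin_Ioo_neBot one_pos
    refine le_of_tendsto hlim ?_
    filter_upwards [self_mem_nhdsWithin] with x hx
    have := hc x hx
    nlinarith [sq_nonneg (deriv ψ x)]
  have hsq : ∀ x ∈ Ioo (0 : ℝ) 1, (6 * Q * (τ x * (1 - τ x))) ^ 2 ≤ deriv ψ x ^ 2 := by
    intro x hx
    have := hc x hx
    linarith
  have hpos : ∀ x ∈ Ioo (0 : ℝ) 1, 0 < deriv ψ x := by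
    have hne : ∀ x ∈ Ioo (0 : ℝ) 1, deriv ψ x ≠ 0 := by
      intro x hx h
      have h1 := hsq x hx
      have h2 := pow_pos (hw x hx) 2
      rw [h] at h1
      linarith
    rcases hasDerivWithinAt_forall_lt_or_forall_gt_of_forall_ne (convex_Ioo (0 : ℝ) 1)
      (fun x hx => (hψd x hx).hasDerivWithinAt) hne with h | h
    · obtain ⟨x, hx, hxe⟩ := exists_deriv_eq_slope ψ one_pos hC1.continuousOn
        (fun x hx => (hψd x hx).differentiableAt.differentiableWithinAt)
      have := h x hx
      rw [hxe, h0, h1] at this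
      linarith
    · exact h
  have hmono : MonotoneOn (fun x => τ x - x) (Icc 0 1) := by
    refine monotoneOn_of_hasDerivWithinAt_nonneg (convex_Icc 0 1) (hτc.sub continuousOn_id)
      (f' := fun x => (6 * Q * (τ x * (1 - τ x)))⁻¹ * deriv ψ x - 1) ?_ ?_
    · intro x hx
      rw [interior_Icc] at hx
      exact ((hτd x hx).sub (hasDerivAt_id x)).hasDerivWithinAt
    · intro x hx
      rw [interior_Icc] at hx
      rw [sub_nonneg, le_inv_mul_iff₀ (hw x hx), mul_one]
      exact le_of_sq_le_sq (hsq x hx) (hpos x hx).le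
  intro x hx
  have hl := hmono (left_mem_Icc.2 zero_le_one) hx hx.1
  have hr := hmono hx (right_mem_Icc.2 zero_le_one) hx.2
  simp only [hτ0, hτ1] at hl hr
  have hx' : τ x = x := by linarith
  rw [← (hφτ x hx).2, hx']
end
end
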